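/- Let X be a measurable space and let Q and Q̃ be weighted evolution operators on X, with Q satisfying the minorization condition with constant ε ∈ (0,1) and probability measure η. Suppose T and U are positive linear operators on the bounded measurable functions on X for which there exists α > 0 such that α φ ≤ Uφ ≤ α⁻¹ φ and α φ ≤ Tφ ≤ α⁻¹ φ pointwise for every bounded measurable φ ≥ 0, and suppose (Q̃)ⁿ = T ∘ Qⁿ ∘ U for every n ≥ 1. Then Q̃ also satisfies a minorization condition (with constant εα² and measure η), so both Q and Q̃ admit unique invariant probability measures ν and ν̃; and the associated principal eigenvalues coincide: ν(Q1) = ν̃(Q̃1), i.e., for any fixed Δt > 0, (1/Δt)·log ν(Q1) = (1/Δt)·log ν̃(Q̃1). -/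

import Mathlib

open MeasureTheory ProbabilityTheory

/-- The action of a weighted evolution operator given by a kernel `κ`:
`(Qφ)(q) = ∫ φ(q') κ(q, dq')`. -/
noncomputable def evolOp {X : Type*} [MeasurableSpace X] (κ : Kernel X X) (φ : X → ℝ) : X → ℝ :=
  fun q => ∫ q', φ q' ∂(κ q)

/-- Bounded measurable real-valued functions. -/
def BddMeas {X : Type*} [MeasurableSpace X] (φ : X → ℝ) : Prop :=
  Measurable φ ∧ ∃ C : ℝ, ∀ x, |φ x| ≤ C

/-- Minorization condition: `ε η(φ) ≤ (Qφ)(q) ≤ ε⁻¹ η(φ)` for all bounded measurable `φ ≥ 0`. -/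
def Minorizes {X : Type*} [MeasurableSpace X] (Q : (X → ℝ) → (X → ℝ)) (ε : ℝ)
    (η : Measure X) : Prop :=
  ∀ φ : X → ℝ, BddMeas φ → (∀ x, 0 ≤ φ x) → ∀ q,
    ε * ∫ x, φ x ∂η ≤ Q φ q ∧ Q φ q ≤ ε⁻¹ * ∫ x, φ x ∂η

/-- The discretized Feynman–Kac semigroup `Φ_n(μ)(φ) = μ(Qⁿφ)/μ(Qⁿ1)`. -/
noncomputable def FK {X : Type*} [MeasurableSpace X] (κ : Kernel X X) (μ : Measure X)
    (n : ℕ) (φ : X → ℝ) : ℝ :=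
  (∫ q, (evolOp κ)^[n] φ q ∂μ) / (∫ q, (evolOp κ)^[n] (fun _ => (1:ℝ)) q ∂μ)

/-- Fixed-point (stationarity) equation: `μ(Qφ) = μ(Q1)·μ(φ)` for all bounded measurable φ. -/
def FixedPt {X : Type*} [MeasurableSpace X] (κ : Kernel X X) (μ : Measure X) : Prop :=
  ∀ φ : X → ℝ, BddMeas φ →
    ∫ q, evolOp κ φ q ∂μ = (∫ q, evolOp κ (fun _ => (1:ℝ)) q ∂μ) * ∫ q, φ q ∂μ

/-!
Write `Φₙ(ρ) = ρ Qⁿ / ρ(Qⁿ1)`. Starting from `A₀ = 0`, put `Aₙ₊₁ = (1 - ε²) Aₙ + ε² Φₙ(η)`.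
Applying the minorization condition to `Qⁿφ - Aₙ(φ) Qⁿ1 ≥ 0` shows by induction that
`Aₙ(φ) Qⁿ1 ≤ Qⁿφ` for `φ ≥ 0`, hence `Aₙ ≤ Φₙ(ρ)` for every probability `ρ`. Taking `ρ = η`, the
measures `Aₙ` increase, and their masses `1 - (1 - ε²)ⁿ` tend to `1`; so `ν = sup Aₙ` is a
probability measure, `Φₙ(η)` converges to it, and it is invariant. An invariant `ρ` satisfies
`Aₙ ≤ Φₙ(ρ) = ρ`, whence `ν ≤ ρ` and `ν = ρ`.

For the eigenvalues, `Qⁿ1` is comparable to `λⁿ` uniformly in `n`, and the bounds on `T` and `U`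
make `Q̃ⁿ1` comparable to `Qⁿ1`; so `λ̃ⁿ` and `λⁿ` are comparable, which forces `λ̃ = λ`.
-/

open Filter Topology

/-- The operator `T` is within a factor `α` of the identity on nonnegative bounded measurable
functions: `α φ ≤ Tφ ≤ α⁻¹ φ`. This is the condition put on both factors of a TU decomposition. -/
def ComparableToId {X : Type*} [MeasurableSpace X] (α : ℝ) (T : (X → ℝ) → (X → ℝ)) : Prop :=
  ∀ φ : X → ℝ, BddMeas φ → (∀ x, 0 ≤ φ x) → ∀ x, α * φ x ≤ T φ x ∧ T φ x ≤ α⁻¹ * φ x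

theorem le_of_eventually_pow_le_const_mul_pow {x y C : ℝ} (hy : 0 < y)
    (h : ∀ᶠ n : ℕ in atTop, x ^ n ≤ C * y ^ n) : x ≤ y := by
  by_contra! hlt
  have hdiv : 1 < x / y := (one_lt_div hy).2 hlt
  obtain ⟨n, hn, hCn⟩ :=
    (h.and ((tendsto_pow_atTop_atTop_of_one_lt hdiv).eventually_gt_atTop C)).exists
  rw [div_pow, lt_div_iff₀ (pow_pos hy n)] at hCn
  exact hn.not_gt hCn

section

variable {X : Type*} [MeasurableSpace X]

theorem iSup_measure_apply_of_monotone {μ : ℕ → Measure X} (hμ : Monotone μ) {s : Set X}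
    (hs : MeasurableSet s) : (⨆ n, μ n) s = ⨆ n, μ n s := by
  have hadd : ∀ f : ℕ → Set X, (∀ i, MeasurableSet (f i)) →
      Pairwise (Function.onFun Disjoint f) →
      ⨆ n, μ n (⋃ i, f i) = ∑' i, ⨆ n, μ n (f i) := fun f hf hd => by
    simp_rw [fun n => measure_iUnion (μ := μ n) hd hf, ENNReal.tsum_eq_iSup_sum,
      ENNReal.finsetSum_iSup_of_monotone fun i _ _ hmn => hμ hmn (f i)]
    exact iSup_comm
  let m : Measure X := Measure.ofMeasurable (fun s _ => ⨆ n, μ n s) (by simp) hadd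
  have hm : ∀ t, MeasurableSet t → m t = ⨆ n, μ n t := fun t ht => Measure.ofMeasurable_apply t ht
  have hle : ⨆ n, μ n ≤ m := iSup_le fun n => Measure.le_iff.2 fun t ht =>
    (le_iSup (fun k => μ k t) n).trans_eq (hm t ht).symm
  exact le_antisymm ((hle s).trans_eq (hm s hs)) (iSup_le fun n => le_iSup μ n s)

theorem norm_integral_sub_integral_le_of_measure_le {E : Type*} [NormedAddCommGroup E]
    [NormedSpace ℝ E] {μ ν : Measure X} [IsFiniteMeasure ν] (hle : μ ≤ ν) {f : X → E}
    (hf : Integrable f ν) {C : ℝ} (hC : ∀ᵐ x ∂ν, ‖f x‖ ≤ C) :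
    ‖∫ x, f x ∂ν - ∫ x, f x ∂μ‖ ≤ C * (ν.real Set.univ - μ.real Set.univ) := by
  have : IsFiniteMeasure μ := isFiniteMeasure_of_le ν hle
  have hsub : ν - μ ≤ ν := Measure.sub_le
  have hadd : ν - μ + μ = ν := Measure.sub_add_cancel_of_le hle
  have hint : ∫ x, f x ∂ν = ∫ x, f x ∂(ν - μ) + ∫ x, f x ∂μ := by
    rw [← integral_add_measure (hf.mono_measure hsub) (hf.mono_measure hle), hadd]
  have hmass : ν.real Set.univ = (ν - μ).real Set.univ + μ.real Set.univ := by
    rw [← measureReal_add_apply, hadd]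
  rw [hint, hmass, add_sub_cancel_right, add_sub_cancel_right]
  exact norm_integral_le_of_norm_le_const ((Measure.absolutelyContinuous_of_le hsub).ae_le hC)

namespace BddMeas

theorem const (c : ℝ) : BddMeas (fun _ : X => c) :=
  ⟨measurable_const, |c|, fun _ => le_rfl⟩

theorem indicator_one {s : Set X} (hs : MeasurableSet s) : BddMeas (s.indicator (1 : X → ℝ)) :=
  ⟨measurable_one.indicator hs, 1, fun x => by by_cases hx : x ∈ s <;> simp [hx]⟩

theorem const_mul {φ : X → ℝ} (hφ : BddMeas φ) (a : ℝ) : BddMeas (fun x => a * φ x) := by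
  obtain ⟨hm, C, hC⟩ := hφ
  exact ⟨hm.const_mul a, |a| * C, fun x => by rw [abs_mul]; gcongr; exact hC x⟩

theorem sub {φ ψ : X → ℝ} (hφ : BddMeas φ) (hψ : BddMeas ψ) : BddMeas (fun x => φ x - ψ x) := by
  obtain ⟨hφm, C, hC⟩ := hφ
  obtain ⟨hψm, D, hD⟩ := hψ
  exact ⟨hφm.sub hψm, C + D, fun x => (abs_sub _ _).trans (add_le_add (hC x) (hD x))⟩

theorem integrable {φ : X → ℝ} (hφ : BddMeas φ) (μ : Measure X) [IsFiniteMeasure μ] :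
    Integrable φ μ := by
  obtain ⟨hm, C, hC⟩ := hφ
  exact .of_bound hm.aestronglyMeasurable C (.of_forall hC)

end BddMeas

theorem measure_le_of_forall_bddMeas_integral_le {μ ν : Measure X} [IsFiniteMeasure μ]
    [IsFiniteMeasure ν]
    (h : ∀ φ : X → ℝ, BddMeas φ → (∀ x, 0 ≤ φ x) → ∫ x, φ x ∂μ ≤ ∫ x, φ x ∂ν) : μ ≤ ν := by
  refine Measure.le_iff.2 fun s hs => ?_
  have hle := h _ (.indicator_one hs) (Set.indicator_nonneg fun _ _ => zero_le_one)
  rw [integral_indicator_one hs, integral_indicator_one hs] at hle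
  exact (ENNReal.toReal_le_toReal (measure_ne_top μ s) (measure_ne_top ν s)).1 hle

theorem tendsto_integral_of_common_minorant {A R : ℕ → Measure X} {ν : Measure X}
    [∀ n, IsProbabilityMeasure (R n)] [IsProbabilityMeasure ν] (hAR : ∀ n, A n ≤ R n)
    (hAν : ∀ n, A n ≤ ν) (hmass : Tendsto (fun n => (A n).real Set.univ) atTop (𝓝 1))
    {φ : X → ℝ} (hφ : BddMeas φ) :
    Tendsto (fun n => ∫ x, φ x ∂(R n)) atTop (𝓝 (∫ x, φ x ∂ν)) := by
  obtain ⟨C, hC⟩ := hφ.2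
  have hdefect : Tendsto (fun n => C * (1 - (A n).real Set.univ)) atTop (𝓝 0) := by
    simpa using (hmass.const_sub 1).const_mul C
  have close : ∀ μ : ℕ → Measure X, (∀ n, IsProbabilityMeasure (μ n)) → (∀ n, A n ≤ μ n) →
      Tendsto (fun n => ∫ x, φ x ∂(μ n) - ∫ x, φ x ∂(A n)) atTop (𝓝 0) := fun μ _ hA =>
    squeeze_zero_norm (fun n => by
      simpa using norm_integral_sub_integral_le_of_measure_le (hA n) (hφ.integrable (μ n))
        (.of_forall hC)) hdefect
  simpa using
    ((close R inferInstance hAR).sub (close (fun _ => ν) inferInstance hAν)).add_const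
      (∫ x, φ x ∂ν)

theorem evolOp_nonneg (κ : Kernel X X) {φ : X → ℝ} (hφ : ∀ x, 0 ≤ φ x) (q : X) :
    0 ≤ evolOp κ φ q :=
  integral_nonneg hφ

theorem iterate_evolOp_nonneg (κ : Kernel X X) {φ : X → ℝ} (hφ : ∀ x, 0 ≤ φ x) (n : ℕ) (q : X) :
    0 ≤ (evolOp κ)^[n] φ q := by
  induction n generalizing q with
  | zero => exact hφ q
  | succ n ih => rw [Function.iterate_succ_apply']; exact evolOp_nonneg κ ih q

theorem evolOp_const_mul (κ : Kernel X X) (a : ℝ) (φ : X → ℝ) (q : X) :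
    evolOp κ (fun x => a * φ x) q = a * evolOp κ φ q :=
  integral_const_mul a φ

instance isFiniteKernel_pow (κ : Kernel X X) [IsFiniteKernel κ] (n : ℕ) :
    IsFiniteKernel (κ ^ n) := by
  induction n with
  | zero => exact inferInstanceAs (IsFiniteKernel Kernel.id)
  | succ n ih => rw [pow_succ]; exact inferInstanceAs (IsFiniteKernel ((κ ^ n) ∘ₖ κ))

section FiniteKernel

variable (κ : Kernel X X) [IsFiniteKernel κ]

theorem bddMeas_evolOp {φ : X → ℝ} (hφ : BddMeas φ) : BddMeas (evolOp κ φ) := by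
  obtain ⟨hm, C, hC⟩ := hφ
  refine ⟨(StronglyMeasurable.integral_kernel (κ := κ) hm.stronglyMeasurable).measurable,
    |C| * κ.bound.toReal, fun q => ?_⟩
  calc |evolOp κ φ q| ≤ |C| * (κ q).real Set.univ :=
        norm_integral_le_of_norm_le_const (f := φ)
          (.of_forall fun x => (hC x).trans (le_abs_self C))
    _ ≤ |C| * κ.bound.toReal := by
        gcongr
        exact ENNReal.toReal_mono κ.bound_ne_top (κ.measure_le_bound q _)

theorem evolOp_mono {φ ψ : X → ℝ} (hφ : BddMeas φ) (hψ : BddMeas ψ) (h : ∀ x, φ x ≤ ψ x) (q : X) :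
    evolOp κ φ q ≤ evolOp κ ψ q :=
  integral_mono (hφ.integrable _) (hψ.integrable _) h

theorem evolOp_sub {φ ψ : X → ℝ} (hφ : BddMeas φ) (hψ : BddMeas ψ) (q : X) :
    evolOp κ (fun x => φ x - ψ x) q = evolOp κ φ q - evolOp κ ψ q :=
  integral_sub (hφ.integrable _) (hψ.integrable _)

theorem bddMeas_iterate_evolOp {φ : X → ℝ} (hφ : BddMeas φ) (n : ℕ) :
    BddMeas ((evolOp κ)^[n] φ) := by
  induction n with
  | zero => exact hφ
  | succ n ih => rw [Function.iterate_succ_apply']; exact bddMeas_evolOp κ ih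

theorem evolOp_comp (κ' : Kernel X X) [IsFiniteKernel κ'] {φ : X → ℝ} (hφ : BddMeas φ) :
    evolOp (κ' ∘ₖ κ) φ = evolOp κ (evolOp κ' φ) :=
  funext fun _ => Kernel.integral_comp (hφ.integrable _)

theorem evolOp_pow {φ : X → ℝ} (hφ : BddMeas φ) (n : ℕ) :
    evolOp (κ ^ n) φ = (evolOp κ)^[n] φ := by
  induction n generalizing φ with
  | zero => exact funext fun q => integral_dirac' φ q hφ.1.stronglyMeasurable
  | succ n ih =>
    rw [pow_succ', Function.iterate_succ_apply, ← ih (bddMeas_evolOp κ hφ)]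
    exact evolOp_comp (κ ^ n) κ hφ

theorem integral_evolOp {φ : X → ℝ} (hφ : BddMeas φ) (μ : Measure X) [IsFiniteMeasure μ] :
    ∫ x, evolOp κ φ x ∂μ = ∫ x, φ x ∂(κ ∘ₘ μ) :=
  (Kernel.integral_comp (κ := Kernel.const Unit μ) (a := ()) (hφ.integrable (κ ∘ₘ μ))).symm

end FiniteKernel

namespace Minorizes

variable {ε : ℝ} {η : Measure X}

theorem of_comparable {Q Q' : (X → ℝ) → X → ℝ} (hmin : Minorizes Q ε η) {c : ℝ} (hc : 0 ≤ c)
    (h : ∀ φ, BddMeas φ → (∀ x, 0 ≤ φ x) → ∀ x, c * Q φ x ≤ Q' φ x ∧ Q' φ x ≤ c⁻¹ * Q φ x) :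
    Minorizes Q' (ε * c) η := by
  intro φ hφ hφ0 q
  obtain ⟨hlow, hup⟩ := hmin φ hφ hφ0 q
  obtain ⟨hlow', hup'⟩ := h φ hφ hφ0 q
  constructor
  · calc ε * c * ∫ x, φ x ∂η = c * (ε * ∫ x, φ x ∂η) := by ring
      _ ≤ c * Q φ q := by gcongr
      _ ≤ Q' φ q := hlow'
  · calc Q' φ q ≤ c⁻¹ * Q φ q := hup'
      _ ≤ c⁻¹ * (ε⁻¹ * ∫ x, φ x ∂η) := by gcongr
      _ = (ε * c)⁻¹ * ∫ x, φ x ∂η := by rw [mul_inv]; ring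

variable [IsProbabilityMeasure η]

theorem le_one {Q : (X → ℝ) → X → ℝ} (hmin : Minorizes Q ε η) : ε ≤ 1 := by
  obtain ⟨x⟩ : Nonempty X := nonempty_of_isProbabilityMeasure η
  obtain ⟨hlow, hup⟩ := hmin _ (.const 1) (fun _ => zero_le_one) x
  have hle : ε ≤ ε⁻¹ := by simpa using hlow.trans hup
  by_contra! hlt
  exact (hle.trans_lt (inv_lt_one_of_one_lt₀ hlt)).not_gt hlt

variable {κ : Kernel X X} [IsFiniteKernel κ]

theorem pow_le_iterate_one (hmin : Minorizes (evolOp κ) ε η) (hε : 0 < ε) (n : ℕ) (q : X) :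
    ε ^ n ≤ (evolOp κ)^[n] (fun _ => 1) q := by
  have hbdd := bddMeas_iterate_evolOp κ (.const 1)
  induction n generalizing q with
  | zero => simp
  | succ n ih =>
    have hη : ε ^ n ≤ ∫ x, (evolOp κ)^[n] (fun _ => 1) x ∂η := by
      simpa using integral_mono (integrable_const (ε ^ n)) ((hbdd n).integrable η) ih
    rw [Function.iterate_succ_apply', pow_succ']
    exact (mul_le_mul_of_nonneg_left hη hε.le).trans
      (hmin _ (hbdd n) (iterate_evolOp_nonneg κ (fun _ => zero_le_one) n) q).1

theorem integral_iterate_one_pos (hmin : Minorizes (evolOp κ) ε η) (hε : 0 < ε) (ρ : Measure X)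
    [IsProbabilityMeasure ρ] (n : ℕ) : 0 < ∫ x, (evolOp κ)^[n] (fun _ => 1) x ∂ρ := by
  have hle := integral_mono (integrable_const (μ := ρ) (ε ^ n))
    ((bddMeas_iterate_evolOp κ (.const 1) n).integrable ρ) (hmin.pow_le_iterate_one hε n)
  exact (pow_pos hε n).trans_le (by simpa using hle)

/-- The Doeblin step: `f - a g ≥ 0` gives `Q (f - a g) ≥ ε η(f - a g)`, and `η(g) ≥ ε Q g`. -/
theorem evolOp_improved_lower_bound (hmin : Minorizes (evolOp κ) ε η) (hε : 0 < ε) {f g : X → ℝ}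
    (hf : BddMeas f) (hg : BddMeas g) (hg0 : ∀ x, 0 ≤ g x) (hgpos : 0 < ∫ x, g x ∂η) {a : ℝ}
    (h : ∀ x, a * g x ≤ f x) (q : X) :
    ((1 - ε ^ 2) * a + ε ^ 2 * ((∫ x, f x ∂η) / ∫ x, g x ∂η)) * evolOp κ g q ≤ evolOp κ f q := by
  have hag := hg.const_mul a
  have hlow := (hmin _ (hf.sub hag) (fun x => sub_nonneg.2 (h x)) q).1
  rw [evolOp_sub κ hf hag, evolOp_const_mul, integral_sub (hf.integrable η) (hag.integrable η),
    integral_const_mul] at hlow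
  have hup := (hmin _ hg hg0 q).2
  have hratio : a ≤ (∫ x, f x ∂η) / ∫ x, g x ∂η := by
    rw [le_div_iff₀ hgpos, ← integral_const_mul]
    exact integral_mono (hag.integrable η) (hf.integrable η) h
  set F := ∫ x, f x ∂η
  set G := ∫ x, g x ∂η
  have hgain : ε ^ 2 * (F / G - a) * evolOp κ g q ≤ ε * (F - a * G) :=
    calc ε ^ 2 * (F / G - a) * evolOp κ g q
        ≤ ε ^ 2 * (F / G - a) * (ε⁻¹ * G) :=
          mul_le_mul_of_nonneg_left hup (mul_nonneg (sq_nonneg ε) (sub_nonneg.2 hratio))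
      _ = ε * (F - a * G) := by field_simp
  linarith

end Minorizes

section FeynmanKac

variable (κ : Kernel X X)

/-- The measure `Φₙ(μ)` obtained by normalizing `μ Qⁿ`; the functional `FK κ μ n` is integration
against it. -/
noncomputable def fkMeasure (μ : Measure X) (n : ℕ) : Measure X :=
  (((κ ^ n) ∘ₘ μ) Set.univ)⁻¹ • ((κ ^ n) ∘ₘ μ)

/-- The increasing sequence of measures `Aₙ` with `A₀ = 0` and `Aₙ₊₁ = (1 - ε²) Aₙ + ε² Φₙ(η)`: the
part of `Φₙ(ρ)` that the minorization condition forces to be independent of `ρ`. -/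
noncomputable def fkMinorant (ε : ℝ) (η : Measure X) : ℕ → Measure X
  | 0 => 0
  | n + 1 => (1 - ε ^ 2).toNNReal • fkMinorant ε η n + (ε ^ 2).toNNReal • fkMeasure κ η n

theorem FK_evolOp (μ : Measure X) (φ : X → ℝ) (n : ℕ)
    (h : ∫ x, (evolOp κ)^[n + 1] (fun _ => 1) x ∂μ ≠ 0) :
    FK κ μ n (evolOp κ φ) = FK κ μ n (evolOp κ fun _ => 1) * FK κ μ (n + 1) φ := by
  simp only [FK, ← Function.iterate_succ_apply]
  field_simp

variable [IsFiniteKernel κ] (μ : Measure X) [IsFiniteMeasure μ]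

instance isFiniteMeasure_fkMeasure (n : ℕ) : IsFiniteMeasure (fkMeasure κ μ n) := by
  unfold fkMeasure
  infer_instance

instance isFiniteMeasure_fkMinorant (ε : ℝ) (n : ℕ) : IsFiniteMeasure (fkMinorant κ ε μ n) := by
  induction n with
  | zero => unfold fkMinorant; infer_instance
  | succ n ih => unfold fkMinorant; infer_instance

theorem integral_fkMeasure {φ : X → ℝ} (hφ : BddMeas φ) (n : ℕ) :
    ∫ x, φ x ∂(fkMeasure κ μ n) = FK κ μ n φ := by
  have hpush : ∀ ψ : X → ℝ, BddMeas ψ →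
      ∫ x, (evolOp κ)^[n] ψ x ∂μ = ∫ x, ψ x ∂((κ ^ n) ∘ₘ μ) := fun ψ hψ => by
    rw [← evolOp_pow κ hψ, integral_evolOp (κ ^ n) hψ]
  rw [FK, hpush _ hφ, hpush _ (.const 1), fkMeasure, ← average_eq', average_eq]
  simp [div_eq_inv_mul]

variable {κ μ} {ε : ℝ}

theorem integral_fkMinorant_succ (hε : ε ∈ Set.Icc (0 : ℝ) 1) {φ : X → ℝ} (hφ : BddMeas φ)
    (n : ℕ) :
    ∫ x, φ x ∂(fkMinorant κ ε μ (n + 1)) =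
      (1 - ε ^ 2) * ∫ x, φ x ∂(fkMinorant κ ε μ n) + ε ^ 2 * FK κ μ n φ := by
  have hε2 : 0 ≤ 1 - ε ^ 2 := sub_nonneg.2 (pow_le_one₀ hε.1 hε.2)
  rw [fkMinorant, integral_add_measure (hφ.integrable _) (hφ.integrable _),
    integral_smul_nnreal_measure, integral_smul_nnreal_measure, integral_fkMeasure κ μ hφ,
    NNReal.smul_def, NNReal.smul_def, Real.coe_toNNReal _ hε2, Real.coe_toNNReal _ (sq_nonneg ε),
    smul_eq_mul, smul_eq_mul]

end FeynmanKac

theorem FixedPt.integral_iterate_evolOp {κ : Kernel X X} [IsFiniteKernel κ] {ρ : Measure X}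
    (h : FixedPt κ ρ) {φ : X → ℝ} (hφ : BddMeas φ) (n : ℕ) :
    ∫ x, (evolOp κ)^[n] φ x ∂ρ = (∫ x, evolOp κ (fun _ => 1) x ∂ρ) ^ n * ∫ x, φ x ∂ρ := by
  induction n with
  | zero => simp
  | succ n ih =>
    rw [Function.iterate_succ_apply', h _ (bddMeas_iterate_evolOp κ hφ n), ih]
    ring

namespace Minorizes

variable {ε : ℝ} {η : Measure X} [IsProbabilityMeasure η] {κ : Kernel X X} [IsFiniteKernel κ]

theorem FK_one (hmin : Minorizes (evolOp κ) ε η) (hε : 0 < ε) (ρ : Measure X)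
    [IsProbabilityMeasure ρ] (n : ℕ) : FK κ ρ n (fun _ => 1) = 1 :=
  div_self (hmin.integral_iterate_one_pos hε ρ n).ne'

theorem isProbabilityMeasure_fkMeasure (hmin : Minorizes (evolOp κ) ε η) (hε : 0 < ε)
    (ρ : Measure X) [IsProbabilityMeasure ρ] (n : ℕ) :
    IsProbabilityMeasure (fkMeasure κ ρ n) := by
  have hone := (integral_fkMeasure κ ρ (.const 1) n).trans (hmin.FK_one hε ρ n)
  exact isProbabilityMeasure_iff_real.2 (by simpa using hone)

theorem fkMinorant_real_univ (hmin : Minorizes (evolOp κ) ε η) (hε : 0 < ε) (n : ℕ) :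
    (fkMinorant κ ε η n).real Set.univ = 1 - (1 - ε ^ 2) ^ n := by
  induction n with
  | zero => simp [fkMinorant]
  | succ n ih =>
    have hsucc := integral_fkMinorant_succ (κ := κ) (μ := η) ⟨hε.le, hmin.le_one⟩ (.const 1) n
    simp only [integral_const, smul_eq_mul, mul_one, hmin.FK_one hε, ih] at hsucc
    rw [hsucc]
    ring

theorem tendsto_fkMinorant_real_univ (hmin : Minorizes (evolOp κ) ε η) (hε : 0 < ε) :
    Tendsto (fun n => (fkMinorant κ ε η n).real Set.univ) atTop (𝓝 1) := by
  have hε2 : ε ^ 2 ≤ 1 := pow_le_one₀ hε.le hmin.le_one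
  have hpow : Tendsto (fun n : ℕ => (1 - ε ^ 2) ^ n) atTop (𝓝 0) :=
    tendsto_pow_atTop_nhds_zero_of_lt_one (sub_nonneg.2 hε2) (sub_lt_self 1 (pow_pos hε 2))
  simpa [hmin.fkMinorant_real_univ hε] using hpow.const_sub 1

theorem integral_fkMinorant_mul_le (hmin : Minorizes (evolOp κ) ε η) (hε : 0 < ε) {φ : X → ℝ}
    (hφ : BddMeas φ) (hφ0 : ∀ x, 0 ≤ φ x) (n : ℕ) (q : X) :
    (∫ x, φ x ∂(fkMinorant κ ε η n)) * (evolOp κ)^[n] (fun _ => 1) q ≤ (evolOp κ)^[n] φ q := by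
  induction n generalizing q with
  | zero => simpa [fkMinorant] using hφ0 q
  | succ n ih =>
    rw [integral_fkMinorant_succ ⟨hε.le, hmin.le_one⟩ hφ, Function.iterate_succ_apply',
      Function.iterate_succ_apply']
    exact hmin.evolOp_improved_lower_bound hε (bddMeas_iterate_evolOp κ hφ n)
      (bddMeas_iterate_evolOp κ (.const 1) n) (iterate_evolOp_nonneg κ (fun _ => zero_le_one) n)
      (hmin.integral_iterate_one_pos hε η n) ih q

theorem integral_fkMinorant_le_FK (hmin : Minorizes (evolOp κ) ε η) (hε : 0 < ε) (ρ : Measure X)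
    [IsProbabilityMeasure ρ] {φ : X → ℝ} (hφ : BddMeas φ) (hφ0 : ∀ x, 0 ≤ φ x) (n : ℕ) :
    ∫ x, φ x ∂(fkMinorant κ ε η n) ≤ FK κ ρ n φ := by
  rw [FK, le_div_iff₀ (hmin.integral_iterate_one_pos hε ρ n), ← integral_const_mul]
  exact integral_mono (((bddMeas_iterate_evolOp κ (.const 1) n).const_mul _).integrable ρ)
    ((bddMeas_iterate_evolOp κ hφ n).integrable ρ) (hmin.integral_fkMinorant_mul_le hε hφ hφ0 n)

theorem fkMinorant_le_fkMeasure (hmin : Minorizes (evolOp κ) ε η) (hε : 0 < ε) (ρ : Measure X)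
    [IsProbabilityMeasure ρ] (n : ℕ) : fkMinorant κ ε η n ≤ fkMeasure κ ρ n :=
  measure_le_of_forall_bddMeas_integral_le fun _ hφ hφ0 =>
    (hmin.integral_fkMinorant_le_FK hε ρ hφ hφ0 n).trans_eq (integral_fkMeasure κ ρ hφ n).symm

theorem monotone_fkMinorant (hmin : Minorizes (evolOp κ) ε η) (hε : 0 < ε) :
    Monotone (fkMinorant κ ε η) := by
  refine monotone_nat_of_le_succ fun n =>
    measure_le_of_forall_bddMeas_integral_le fun φ hφ hφ0 => ?_
  rw [integral_fkMinorant_succ ⟨hε.le, hmin.le_one⟩ hφ]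
  have hle := hmin.integral_fkMinorant_le_FK hε η hφ hφ0 n
  linarith [mul_le_mul_of_nonneg_left hle (sq_nonneg ε)]

theorem isProbabilityMeasure_iSup_fkMinorant (hmin : Minorizes (evolOp κ) ε η) (hε : 0 < ε) :
    IsProbabilityMeasure (⨆ n, fkMinorant κ ε η n) := by
  have hmono := hmin.monotone_fkMinorant hε
  have hlim : Tendsto (fun n => fkMinorant κ ε η n Set.univ) atTop (𝓝 1) := by
    simpa using ENNReal.tendsto_ofReal (hmin.tendsto_fkMinorant_real_univ hε)
  refine ⟨?_⟩
  rw [iSup_measure_apply_of_monotone hmono .univ]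
  exact tendsto_nhds_unique (tendsto_atTop_iSup fun m n hmn => hmono hmn Set.univ) hlim

theorem tendsto_FK (hmin : Minorizes (evolOp κ) ε η) (hε : 0 < ε) (ρ : Measure X)
    [IsProbabilityMeasure ρ] {φ : X → ℝ} (hφ : BddMeas φ) :
    Tendsto (fun n => FK κ ρ n φ) atTop (𝓝 (∫ x, φ x ∂(⨆ n, fkMinorant κ ε η n))) := by
  have hR := hmin.isProbabilityMeasure_fkMeasure hε ρ
  have hν := hmin.isProbabilityMeasure_iSup_fkMinorant hε
  simpa only [integral_fkMeasure κ ρ hφ] using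
    tendsto_integral_of_common_minorant (hmin.fkMinorant_le_fkMeasure hε ρ) (le_iSup _)
      (hmin.tendsto_fkMinorant_real_univ hε) hφ

theorem fixedPt_iSup_fkMinorant (hmin : Minorizes (evolOp κ) ε η) (hε : 0 < ε) :
    FixedPt κ (⨆ n, fkMinorant κ ε η n) := by
  intro φ hφ
  refine tendsto_nhds_unique (hmin.tendsto_FK hε η (bddMeas_evolOp κ hφ)) ?_
  simp only [fun n => FK_evolOp κ η φ n (hmin.integral_iterate_one_pos hε η (n + 1)).ne']
  exact (hmin.tendsto_FK hε η (bddMeas_evolOp κ (.const 1))).mul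
    ((hmin.tendsto_FK hε η hφ).comp (tendsto_add_atTop_nat 1))

theorem FK_eq_integral_of_fixedPt (hmin : Minorizes (evolOp κ) ε η) (hε : 0 < ε) {ρ : Measure X}
    [IsProbabilityMeasure ρ] (hρ : FixedPt κ ρ) {φ : X → ℝ} (hφ : BddMeas φ) (n : ℕ) :
    FK κ ρ n φ = ∫ x, φ x ∂ρ := by
  rw [FK, div_eq_iff (hmin.integral_iterate_one_pos hε ρ n).ne', hρ.integral_iterate_evolOp hφ,
    hρ.integral_iterate_evolOp (.const 1)]
  simp [mul_comm]

theorem iSup_fkMinorant_le_of_fixedPt (hmin : Minorizes (evolOp κ) ε η) (hε : 0 < ε)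
    {ρ : Measure X} [IsProbabilityMeasure ρ] (hρ : FixedPt κ ρ) :
    ⨆ n, fkMinorant κ ε η n ≤ ρ :=
  iSup_le fun n => measure_le_of_forall_bddMeas_integral_le fun _ hφ hφ0 =>
    (hmin.integral_fkMinorant_le_FK hε ρ hφ hφ0 n).trans_eq
      (hmin.FK_eq_integral_of_fixedPt hε hρ hφ n)

theorem existsUnique_fixedPt (hmin : Minorizes (evolOp κ) ε η) (hε : 0 < ε) :
    ∃! ν : Measure X, IsProbabilityMeasure ν ∧ FixedPt κ ν := by
  have hν := hmin.isProbabilityMeasure_iSup_fkMinorant hε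
  refine ⟨_, ⟨hν, hmin.fixedPt_iSup_fkMinorant hε⟩, fun ρ ⟨hρ, hfix⟩ => ?_⟩
  exact (Measure.eq_of_le_of_isProbabilityMeasure (hmin.iSup_fkMinorant_le_of_fixedPt hε hfix)).symm

theorem iterate_one_le_mul_eigenvalue_pow (hmin : Minorizes (evolOp κ) ε η) (hε : 0 < ε)
    {ν : Measure X} [IsProbabilityMeasure ν] (hν : FixedPt κ ν) (n : ℕ) (q : X) :
    (evolOp κ)^[n] (fun _ => 1) q ≤ (ε ^ 2)⁻¹ * (∫ x, evolOp κ (fun _ => 1) x ∂ν) ^ n := by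
  cases n with
  | zero => simpa using one_le_inv_iff₀.2 ⟨pow_pos hε 2, pow_le_one₀ hε.le hmin.le_one⟩
  | succ n =>
    have hbdd := bddMeas_iterate_evolOp κ (.const 1)
    have hbounds := hmin _ (hbdd n) (iterate_evolOp_nonneg κ (fun _ => zero_le_one) n)
    have hpow := hν.integral_iterate_evolOp (.const 1) (n + 1)
    simp only [Function.iterate_succ_apply', integral_const, probReal_univ, smul_eq_mul,
      mul_one] at hpow ⊢
    set m := ∫ x, (evolOp κ)^[n] (fun _ => 1) x ∂η
    have hlow : ε * m ≤ (∫ x, evolOp κ (fun _ => 1) x ∂ν) ^ (n + 1) := by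
      rw [← hpow]
      simpa using integral_mono (integrable_const (μ := ν) (ε * m))
        ((bddMeas_evolOp κ (hbdd n)).integrable ν) fun x => (hbounds x).1
    calc evolOp κ ((evolOp κ)^[n] fun _ => 1) q ≤ ε⁻¹ * m := (hbounds q).2
      _ = (ε ^ 2)⁻¹ * (ε * m) := by field_simp
      _ ≤ (ε ^ 2)⁻¹ * (∫ x, evolOp κ (fun _ => 1) x ∂ν) ^ (n + 1) := by gcongr

theorem eigenvalue_le_of_eventually_iterate_one_le (hmin : Minorizes (evolOp κ) ε η) (hε : 0 < ε)
    {κ' : Kernel X X} [IsFiniteKernel κ'] {ν ν' : Measure X} [IsProbabilityMeasure ν]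
    [IsProbabilityMeasure ν'] (hν : FixedPt κ ν) (hν' : FixedPt κ' ν') {c : ℝ} (hc : 0 ≤ c)
    (h : ∀ᶠ n : ℕ in atTop, ∀ x,
      (evolOp κ')^[n] (fun _ => 1) x ≤ c * (evolOp κ)^[n] (fun _ => 1) x) :
    ∫ x, evolOp κ' (fun _ => 1) x ∂ν' ≤ ∫ x, evolOp κ (fun _ => 1) x ∂ν := by
  refine le_of_eventually_pow_le_const_mul_pow (C := c * (ε ^ 2)⁻¹)
    (hmin.integral_iterate_one_pos hε ν 1) (h.mono fun n hn => ?_)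
  have hpow := hν'.integral_iterate_evolOp (.const 1) n
  simp only [integral_const, probReal_univ, smul_eq_mul, mul_one] at hpow
  rw [← hpow, mul_assoc]
  simpa using integral_mono ((bddMeas_iterate_evolOp κ' (.const 1) n).integrable ν')
    (integrable_const _) fun x => (hn x).trans
      (mul_le_mul_of_nonneg_left (hmin.iterate_one_le_mul_eigenvalue_pow hε hν n x) hc)

end Minorizes

theorem ComparableToId.conj_evolOp {κ : Kernel X X} [IsFiniteKernel κ]
    {T U : (X → ℝ) → X → ℝ} {α : ℝ} (hα : 0 < α) (hT : ComparableToId α T)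
    (hU : ComparableToId α U) (hUmaps : ∀ φ, BddMeas φ → BddMeas (U φ)) {φ : X → ℝ}
    (hφ : BddMeas φ) (hφ0 : ∀ x, 0 ≤ φ x) (x : X) :
    α ^ 2 * evolOp κ φ x ≤ T (evolOp κ (U φ)) x ∧
      T (evolOp κ (U φ)) x ≤ (α ^ 2)⁻¹ * evolOp κ φ x := by
  have hUφ := hUmaps φ hφ
  have hUφ0 : ∀ y, 0 ≤ U φ y := fun y => (mul_nonneg hα.le (hφ0 y)).trans (hU φ hφ hφ0 y).1
  obtain ⟨hTlow, hTup⟩ := hT _ (bddMeas_evolOp κ hUφ) (evolOp_nonneg κ hUφ0) x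
  have hUlow := evolOp_mono κ (hφ.const_mul α) hUφ (fun y => (hU φ hφ hφ0 y).1) x
  have hUup := evolOp_mono κ hUφ (hφ.const_mul α⁻¹) (fun y => (hU φ hφ hφ0 y).2) x
  rw [evolOp_const_mul] at hUlow hUup
  constructor
  · calc α ^ 2 * evolOp κ φ x = α * (α * evolOp κ φ x) := by ring
      _ ≤ α * evolOp κ (U φ) x := by gcongr
      _ ≤ T (evolOp κ (U φ)) x := hTlow
  · calc T (evolOp κ (U φ)) x ≤ α⁻¹ * evolOp κ (U φ) x := hTup
      _ ≤ α⁻¹ * (α⁻¹ * evolOp κ φ x) := by gcongr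
      _ = (α ^ 2)⁻¹ * evolOp κ φ x := by ring

end

theorem TU_schemes_same_eigenvalue_general
    {X : Type*} [MeasurableSpace X] {κ κ' : Kernel X X} [IsFiniteKernel κ] [IsFiniteKernel κ']
    {ε : ℝ} (hε : 0 < ε) {η : Measure X} [IsProbabilityMeasure η]
    (hmin : Minorizes (evolOp κ) ε η) {T U : (X → ℝ) → (X → ℝ)}
    (hUmaps : ∀ φ, BddMeas φ → BddMeas (U φ)) {α : ℝ} (hα : 0 < α)
    (hT : ComparableToId α T) (hU : ComparableToId α U)
    (hTU : ∀ n : ℕ, 1 ≤ n → ∀ φ, BddMeas φ → ∀ x,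
      (evolOp κ')^[n] φ x = T ((evolOp κ)^[n] (U φ)) x) :
    Minorizes (evolOp κ') (ε * α ^ 2) η ∧
    ∃ ν ν' : Measure X, IsProbabilityMeasure ν ∧ IsProbabilityMeasure ν' ∧
      FixedPt κ ν ∧ FixedPt κ' ν' ∧
      (∀ ρ : Measure X, IsProbabilityMeasure ρ → FixedPt κ ρ → ρ = ν) ∧
      (∀ ρ : Measure X, IsProbabilityMeasure ρ → FixedPt κ' ρ → ρ = ν') ∧
      (∫ x, evolOp κ (fun _ => (1 : ℝ)) x ∂ν = ∫ x, evolOp κ' (fun _ => (1 : ℝ)) x ∂ν') ∧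
      (∀ Δt : ℝ, 0 < Δt →
        (1 / Δt) * Real.log (∫ x, evolOp κ (fun _ => (1 : ℝ)) x ∂ν) =
          (1 / Δt) * Real.log (∫ x, evolOp κ' (fun _ => (1 : ℝ)) x ∂ν')) := by
  have hα2 : 0 < α ^ 2 := pow_pos hα 2
  have hcomp : ∀ n : ℕ, 1 ≤ n → ∀ φ, BddMeas φ → (∀ x, 0 ≤ φ x) → ∀ x,
      α ^ 2 * (evolOp κ)^[n] φ x ≤ (evolOp κ')^[n] φ x ∧
        (evolOp κ')^[n] φ x ≤ (α ^ 2)⁻¹ * (evolOp κ)^[n] φ x := fun n hn φ hφ hφ0 x => by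
    rw [hTU n hn φ hφ, ← evolOp_pow κ hφ, ← evolOp_pow κ (hUmaps φ hφ)]
    exact ComparableToId.conj_evolOp hα hT hU hUmaps hφ hφ0 x
  have hmin' : Minorizes (evolOp κ') (ε * α ^ 2) η := hmin.of_comparable hα2.le (hcomp 1 le_rfl)
  obtain ⟨ν, ⟨hνP, hν⟩, hν_unique⟩ := hmin.existsUnique_fixedPt hε
  obtain ⟨ν', ⟨hνP', hν'⟩, hν_unique'⟩ := hmin'.existsUnique_fixedPt (mul_pos hε hα2)
  have heq : ∫ x, evolOp κ (fun _ => 1) x ∂ν = ∫ x, evolOp κ' (fun _ => 1) x ∂ν' := by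
    have hone := fun n hn => hcomp n hn _ (.const 1) fun _ => zero_le_one
    refine le_antisymm ?_ ?_
    · refine hmin'.eigenvalue_le_of_eventually_iterate_one_le (mul_pos hε hα2) hν' hν
        (inv_nonneg.2 hα2.le) ((eventually_ge_atTop 1).mono fun n hn x => ?_)
      exact (le_inv_mul_iff₀ hα2).2 (hone n hn x).1
    · exact hmin.eigenvalue_le_of_eventually_iterate_one_le hε hν hν' (inv_nonneg.2 hα2.le)
        ((eventually_ge_atTop 1).mono fun n hn x => (hone n hn x).2)
  exact ⟨hmin', ν, ν', hνP, hνP', hν, hν', fun ρ hρ hfix => hν_unique ρ ⟨hρ, hfix⟩,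
    fun ρ hρ hfix => hν_unique' ρ ⟨hρ, hfix⟩, heq, fun Δt _ => by rw [heq]⟩

/-- Equality of the approximate principal eigenvalues of two schemes related by a
TU decomposition: if `Q̃ⁿ = T ∘ Qⁿ ∘ U` for n ≥ 1, then Q̃ inherits a minorization
condition (with constant εα² and the same measure η), both schemes admit unique invariant
probability measures ν and ν̃, and `ν(Q1) = ν̃(Q̃1)`, i.e. the associated eigenvalues
`(1/Δt) log ν(Q1)` coincide for any Δt > 0. -/
theorem TU_schemes_same_eigenvalue
    {X : Type*} [MeasurableSpace X] (κ κ' : Kernel X X) [IsFiniteKernel κ] [IsFiniteKernel κ']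
    (ε : ℝ) (hε : ε ∈ Set.Ioo (0:ℝ) 1) (η : Measure X) [IsProbabilityMeasure η]
    (hmin : Minorizes (evolOp κ) ε η)
    (T U : (X → ℝ) → (X → ℝ))
    (hTlin : IsLinearMap ℝ T) (hUlin : IsLinearMap ℝ U)
    (hTmaps : ∀ φ, BddMeas φ → BddMeas (T φ)) (hUmaps : ∀ φ, BddMeas φ → BddMeas (U φ))
    (hTpos : ∀ φ, BddMeas φ → (∀ x, 0 ≤ φ x) → ∀ x, 0 ≤ T φ x)
    (hUpos : ∀ φ, BddMeas φ → (∀ x, 0 ≤ φ x) → ∀ x, 0 ≤ U φ x)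
    (α : ℝ) (hα : 0 < α)
    (hTbd : ∀ φ, BddMeas φ → (∀ x, 0 ≤ φ x) → ∀ x, α * φ x ≤ T φ x ∧ T φ x ≤ α⁻¹ * φ x)
    (hUbd : ∀ φ, BddMeas φ → (∀ x, 0 ≤ φ x) → ∀ x, α * φ x ≤ U φ x ∧ U φ x ≤ α⁻¹ * φ x)
    (hTU : ∀ n : ℕ, 1 ≤ n → ∀ φ, BddMeas φ → ∀ x,
      (evolOp κ')^[n] φ x = T ((evolOp κ)^[n] (U φ)) x) :
    Minorizes (evolOp κ') (ε * α ^ 2) η ∧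
    ∃ ν ν' : Measure X, IsProbabilityMeasure ν ∧ IsProbabilityMeasure ν' ∧
      FixedPt κ ν ∧ FixedPt κ' ν' ∧
      (∀ ρ : Measure X, IsProbabilityMeasure ρ → FixedPt κ ρ → ρ = ν) ∧
      (∀ ρ : Measure X, IsProbabilityMeasure ρ → FixedPt κ' ρ → ρ = ν') ∧
      (∫ x, evolOp κ (fun _ => (1:ℝ)) x ∂ν = ∫ x, evolOp κ' (fun _ => (1:ℝ)) x ∂ν') ∧
      (∀ Δt : ℝ, 0 < Δt →
        (1 / Δt) * Real.log (∫ x, evolOp κ (fun _ => (1:ℝ)) x ∂ν) =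
          (1 / Δt) * Real.log (∫ x, evolOp κ' (fun _ => (1:ℝ)) x ∂ν')) :=
  TU_schemes_same_eigenvalue_general hε.1 hmin hUmaps hα hTbd hUbd hTU
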